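/- arXiv:1511.05878 — 3 statements merged into one kernel-verified Lean document; each statement's English description precedes it below -/
import Mathlib

section
/- Let {Xₙ | n ∈ ℕ} be a collection of Polish spaces, and for each n ≥ 1 let π₍₀,ₙ₎ be a Borel probability measure on X₀ × Xₙ such that all the measures π₍₀,ₙ₎ have the same first marginal (i.e. the pushforward of π₍₀,ₙ₎ under the first projection is the same measure on X₀ for all n ≥ 1). Then there exists a Borel probability measure π on the countable product Π_{n ∈ ℕ} Xₙ such that for every n ≥ 1 the pushforward of π under the map (xₖ)ₖ ↦ (x₀, xₙ) equals π₍₀,ₙ₎. -/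
open MeasureTheory
open scoped ENNReal

open ProbabilityTheory in
lemma glue_aux_measurable {S : Type*} [MeasurableSpace S] {X : ℕ → Type*}
    [∀ n, MeasurableSpace (X n)] (η : ∀ n, Kernel S (X n)) [∀ n, IsMarkovKernel (η n)] :
    Measurable (fun x => Measure.infinitePi (fun n => η n x)) := by
  refine Measurable.measure_of_isPiSystem_of_isProbabilityMeasure
    (S := squareCylinders (fun n => {s : Set (X n) | MeasurableSet s}))
    generateFrom_squareCylinders.symm
    (isPiSystem_squareCylinders (fun n => MeasurableSpace.isPiSystem_measurableSet)
      (fun n => MeasurableSet.univ)) ?_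
  rintro _ ⟨s, t, ht, rfl⟩
  have ht' : ∀ n, MeasurableSet (t n) := fun n => ht n (Set.mem_univ n)
  simp_rw [Measure.infinitePi_pi _ (s := s) (t := t) (fun i _ => ht' i)]
  exact Finset.measurable_prod _ fun n _ => (η n).measurable_coe (ht' n)

open ProbabilityTheory in
/-- Let `{Xₙ | n ∈ ℕ}` be a collection of Polish spaces and for each
`n ≥ 1` let `π n` be a Borel probability measure on `X 0 × X n`, all having the
same first marginal. Then there exists a Borel probability measure on the countable
product `Π n, X n` whose pushforward under `(x k)ₖ ↦ (x 0, x n)` equals `π n` for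
every `n ≥ 1`. -/
theorem glue_countably_many
    {X : ℕ → Type*}
    [∀ n, TopologicalSpace (X n)] [∀ n, PolishSpace (X n)]
    [∀ n, MeasurableSpace (X n)] [∀ n, BorelSpace (X n)]
    (π : (n : ℕ) → Measure (X 0 × X n))
    (hprob : ∀ n, 1 ≤ n → IsProbabilityMeasure (π n))
    (hcons : ∀ n m, 1 ≤ n → 1 ≤ m →
      Measure.map Prod.fst (π n) = Measure.map Prod.fst (π m)) :
    ∃ μ : Measure (∀ n, X n), IsProbabilityMeasure μ ∧
      ∀ n, 1 ≤ n → Measure.map (fun x => (x 0, x n)) μ = π n := by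
  have hex : ∀ n, ∃ η : Kernel (X 0) (X (n + 1)), IsMarkovKernel η ∧
      (π 1).fst ⊗ₘ η = π (n + 1) := by
    intro n
    haveI := hprob (n + 1) (by omega)
    haveI : Nonempty (X (n + 1)) := (nonempty_of_isProbabilityMeasure (π (n + 1))).map Prod.snd
    refine ⟨(π (n + 1)).condKernel, inferInstance, ?_⟩
    have h : (π 1).fst = (π (n + 1)).fst := hcons 1 (n + 1) le_rfl (by omega)
    rw [h]
    exact (π (n + 1)).disintegrate _
  choose κ hκ hκπ using hex
  let η : ∀ n, Kernel (X 0) (X n) := fun n => match n with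
    | 0 => Kernel.id
    | n + 1 => κ n
  haveI hη : ∀ n, IsMarkovKernel (η n) := fun n => match n with
    | 0 => inferInstanceAs (IsMarkovKernel Kernel.id)
    | n + 1 => hκ n
  haveI := hprob 1 le_rfl
  have hm := glue_aux_measurable η
  let K : Kernel (X 0) (∀ n, X n) := ⟨_, hm⟩
  haveI : IsMarkovKernel K := ⟨fun x => by
    change IsProbabilityMeasure (Measure.infinitePi (fun n => η n x)); infer_instance⟩
  refine ⟨(π 1).fst.bind K, inferInstance, ?_⟩
  rintro (_ | n) hn
  · omega
  rw [← hκπ n]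
  have hp : Measurable (fun x : ∀ n, X n => (x 0, x (n + 1))) := by fun_prop
  haveI : IsProbabilityMeasure (((π 1).fst.bind K).map (fun x => (x 0, x (n + 1)))) :=
    Measure.isProbabilityMeasure_map hp.aemeasurable
  refine Measure.ext_prod fun {A B} hA hB => ?_
  rw [Measure.map_apply hp (hA.prod hB), Measure.bind_apply (hp (hA.prod hB)) K.aemeasurable,
    Measure.compProd_apply_prod hA hB, ← lintegral_indicator hA]
  refine lintegral_congr fun x => ?_
  classical
  let t : ∀ k, Set (X k) := fun k => if h : k = 0 then h ▸ A else
    if h : k = n + 1 then h ▸ B else Set.univ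
  have t0 : t 0 = A := by simp [t]
  have t1 : t (n + 1) = B := by simp [t]
  have hs : (fun x : ∀ n, X n => (x 0, x (n + 1))) ⁻¹' (A ×ˢ B) =
      Set.pi ((({0, n + 1} : Finset ℕ)) : Set ℕ) t := by
    ext y
    simp [t0, t1]
  change Measure.infinitePi (fun n => η n x) _ = _
  rw [hs, Measure.infinitePi_pi]
  · rw [Finset.prod_pair (by omega), t0, t1]
    change Kernel.id x A * κ n x B = _
    rw [Kernel.id_apply, Measure.dirac_apply' _ hA]
    by_cases hx : x ∈ A <;> simp [hx]
  · intro i hi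
    simp only [Finset.mem_insert, Finset.mem_singleton] at hi
    rcases hi with rfl | rfl
    · rwa [t0]
    · rwa [t1]
end

section
/- Assume that for every Borel probability measure μ on X × X × X there exists a Borel-measurable map ζ : Ω → X × X × X whose law is μ. Let d be a probability metric on R(X). Then the minimal probability metric d̂ is a simple probability metric: d̂(ξ, ξ) = 0 for all ξ, d̂ is symmetric, d̂ satisfies the triangle inequality d̂(ξ, η) ≤ d̂(ξ, ζ) + d̂(ζ, η) for all ξ, η, ζ ∈ R(X), d̂ satisfies (PM), and L(ξ) = L(ξ′) implies d̂(ξ, ξ′) = 0. -/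
open MeasureTheory
open scoped ENNReal

/-- The minimal probability metric associated with `d`:
`d̂(ξ, η) = inf { d(ξ′, η′) | ξ′, η′ measurable, L(ξ′) = L(ξ), L(η′) = L(η) }`. -/
noncomputable def minPM {Ω X : Type*} [MeasurableSpace Ω] [MeasurableSpace X]
    (P : Measure Ω) (d : (Ω → X) → (Ω → X) → ℝ≥0∞) (ξ η : Ω → X) : ℝ≥0∞ :=
  ⨅ (ξ' : Ω → X) (η' : Ω → X) (_ : Measurable ξ') (_ : Measurable η')
    (_ : Measure.map ξ' P = Measure.map ξ P) (_ : Measure.map η' P = Measure.map η P),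
    d ξ' η'

open ProbabilityTheory in
lemma glue_aux {Ω X : Type*} [MeasurableSpace Ω] [MeasurableSpace X] [StandardBorelSpace X]
    (P : Measure Ω) [IsProbabilityMeasure P]
    (hrich : ∀ μ : Measure (X × X × X), IsProbabilityMeasure μ →
      ∃ ζ : Ω → X × X × X, Measurable ζ ∧ Measure.map ζ P = μ)
    (a b b' c : Ω → X) (ha : Measurable a) (hb : Measurable b) (hb' : Measurable b')
    (hc : Measurable c) (h : Measure.map b P = Measure.map b' P) :
    ∃ x z y : Ω → X, Measurable x ∧ Measurable z ∧ Measurable y ∧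
      Measure.map (fun ω => (z ω, x ω)) P = Measure.map (fun ω => (b ω, a ω)) P ∧
      Measure.map (fun ω => (z ω, y ω)) P = Measure.map (fun ω => (b' ω, c ω)) P := by
  obtain ⟨ω₀⟩ : Nonempty Ω := P.nonempty_of_neZero
  have : Nonempty X := ⟨a ω₀⟩
  have : IsProbabilityMeasure (P.map b) := Measure.isProbabilityMeasure_map hb.aemeasurable
  obtain ⟨w, hw, hwl⟩ := hrich
    ((P.map b) ⊗ₘ (condDistrib a b P ×ₖ condDistrib c b' P)) inferInstance
  refine ⟨fun ω => (w ω).2.1, fun ω => (w ω).1, fun ω => (w ω).2.2, by fun_prop, by fun_prop,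
    by fun_prop, ?_, ?_⟩
  · rw [← compProd_map_condDistrib ha.aemeasurable,
      ← Kernel.fst_prod (condDistrib a b P) (condDistrib c b' P), Kernel.fst_eq,
      Measure.compProd_map measurable_fst, ← hwl, Measure.map_map (by fun_prop) hw]
    rfl
  · rw [← compProd_map_condDistrib hc.aemeasurable, ← h,
      ← Kernel.snd_prod (condDistrib a b P) (condDistrib c b' P), Kernel.snd_eq,
      Measure.compProd_map measurable_snd, ← hwl, Measure.map_map (by fun_prop) hw]
    rfl

lemma minPM_le_aux {Ω X : Type*} [MeasurableSpace Ω] [MeasurableSpace X]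
    (P : Measure Ω) (d : (Ω → X) → (Ω → X) → ℝ≥0∞) (ξ η ξ' η' : Ω → X)
    (h1 : Measurable ξ') (h2 : Measurable η')
    (h3 : Measure.map ξ' P = Measure.map ξ P) (h4 : Measure.map η' P = Measure.map η P) :
    minPM P d ξ η ≤ d ξ' η' :=
  iInf_le_of_le ξ' <| iInf_le_of_le η' <| iInf_le_of_le h1 <| iInf_le_of_le h2 <|
    iInf_le_of_le h3 <| iInf_le_of_le h4 le_rfl

lemma le_minPM_aux {Ω X : Type*} [MeasurableSpace Ω] [MeasurableSpace X]
    (P : Measure Ω) (d : (Ω → X) → (Ω → X) → ℝ≥0∞) (ξ η : Ω → X) (r : ℝ≥0∞)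
    (h : ∀ ξ' η', Measurable ξ' → Measurable η' → Measure.map ξ' P = Measure.map ξ P →
      Measure.map η' P = Measure.map η P → r ≤ d ξ' η') :
    r ≤ minPM P d ξ η :=
  le_iInf fun ξ' => le_iInf fun η' => le_iInf fun h1 => le_iInf fun h2 => le_iInf fun h3 =>
    le_iInf fun h4 => h ξ' η' h1 h2 h3 h4

lemma exists_minPM_aux {Ω X : Type*} [MeasurableSpace Ω] [MeasurableSpace X]
    (P : Measure Ω) (d : (Ω → X) → (Ω → X) → ℝ≥0∞) (ξ η : Ω → X) (r : ℝ≥0∞)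
    (h : minPM P d ξ η < r) :
    ∃ ξ' η', Measurable ξ' ∧ Measurable η' ∧ Measure.map ξ' P = Measure.map ξ P ∧
      Measure.map η' P = Measure.map η P ∧ d ξ' η' < r := by
  by_contra! hc
  exact absurd (le_minPM_aux P d ξ η r hc) (not_le.2 h)

/-- Assume that every Borel probability measure on `X × X × X` is the
law of some random variable `Ω → X × X × X`. If `d` is a probability metric on
`R(X)`, then the minimal probability metric `d̂` is a simple probability metric. -/
theorem minPM_isSimpleProbMetric
    {Ω X : Type*} [MeasurableSpace Ω]
    [TopologicalSpace X] [PolishSpace X] [MeasurableSpace X] [BorelSpace X]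
    (P : Measure Ω) [IsProbabilityMeasure P]
    (hrich : ∀ μ : Measure (X × X × X), IsProbabilityMeasure μ →
      ∃ ζ : Ω → X × X × X, Measurable ζ ∧ Measure.map ζ P = μ)
    (d : (Ω → X) → (Ω → X) → ℝ≥0∞)
    (hrefl : ∀ ξ : Ω → X, Measurable ξ → d ξ ξ = 0)
    (hsymm : ∀ ξ η : Ω → X, Measurable ξ → Measurable η → d ξ η = d η ξ)
    (htri : ∀ ξ η ζ : Ω → X, Measurable ξ → Measurable η → Measurable ζ →
      d ξ η ≤ d ξ ζ + d ζ η)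
    (hPM : ∀ ξ η ξ' η' : Ω → X, Measurable ξ → Measurable η →
      Measurable ξ' → Measurable η' →
      Measure.map (fun ω => (ξ ω, η ω)) P = Measure.map (fun ω => (ξ' ω, η' ω)) P →
      d ξ η = d ξ' η') :
    (∀ ξ : Ω → X, Measurable ξ → minPM P d ξ ξ = 0) ∧
    (∀ ξ η : Ω → X, Measurable ξ → Measurable η → minPM P d ξ η = minPM P d η ξ) ∧
    (∀ ξ η ζ : Ω → X, Measurable ξ → Measurable η → Measurable ζ →
      minPM P d ξ η ≤ minPM P d ξ ζ + minPM P d ζ η) ∧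
    (∀ ξ η ξ' η' : Ω → X, Measurable ξ → Measurable η →
      Measurable ξ' → Measurable η' →
      Measure.map (fun ω => (ξ ω, η ω)) P = Measure.map (fun ω => (ξ' ω, η' ω)) P →
      minPM P d ξ η = minPM P d ξ' η') ∧
    (∀ ξ ξ' : Ω → X, Measurable ξ → Measurable ξ' →
      Measure.map ξ P = Measure.map ξ' P → minPM P d ξ ξ' = 0) := by
  have hsymm' : ∀ ξ η : Ω → X, minPM P d ξ η ≤ minPM P d η ξ := by
    intro ξ η
    refine le_minPM_aux P d _ _ _ fun ξ' η' h1 h2 h3 h4 => ?_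
    rw [hsymm ξ' η' h1 h2]
    exact minPM_le_aux P d _ _ _ _ h2 h1 h4 h3
  have hsimple : ∀ ξ ξ' : Ω → X, Measurable ξ → Measurable ξ' →
      Measure.map ξ P = Measure.map ξ' P → minPM P d ξ ξ' = 0 := by
    intro ξ ξ' h1 h2 h
    refine le_antisymm ?_ bot_le
    rw [← hrefl ξ h1]
    exact minPM_le_aux P d _ _ _ _ h1 h1 rfl h
  refine ⟨fun ξ h => hsimple ξ ξ h h rfl, fun ξ η _ _ => le_antisymm (hsymm' _ _) (hsymm' _ _),
    ?_, ?_, hsimple⟩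
  · intro ξ η ζ hξ hη hζ
    refine ENNReal.le_of_forall_pos_le_add fun ε hε hfin => ?_
    have hε2 : ((ε : ℝ≥0∞) / 2) ≠ 0 := by simp [hε.ne']
    obtain ⟨hf1, hf2⟩ := ENNReal.add_lt_top.1 hfin
    obtain ⟨a, b, ha, hb, hal, hbl, hab⟩ := exists_minPM_aux P d ξ ζ _
      (ENNReal.lt_add_right hf1.ne hε2)
    obtain ⟨b', c, hb', hc, hbl', hcl, hbc⟩ := exists_minPM_aux P d ζ η _
      (ENNReal.lt_add_right hf2.ne hε2)
    obtain ⟨x, z, y, hx, hz, hy, hzx, hzy⟩ := glue_aux P hrich a b b' c ha hb hb' hc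
      (hbl.trans hbl'.symm)
    have e1 : d x z = d a b := by
      rw [hsymm x z hx hz, hsymm a b ha hb]
      exact hPM _ _ _ _ hz hx hb ha hzx
    have e2 : d z y = d b' c := hPM _ _ _ _ hz hy hb' hc hzy
    have hxl : Measure.map x P = Measure.map ξ P := by
      rw [← hal, ← Measure.snd_map_prodMk (Y := x) hz, hzx, Measure.snd_map_prodMk hb]
    have hyl : Measure.map y P = Measure.map η P := by
      rw [← hcl, ← Measure.snd_map_prodMk (Y := y) hz, hzy, Measure.snd_map_prodMk hb']
    calc minPM P d ξ η ≤ d x y := minPM_le_aux P d _ _ _ _ hx hy hxl hyl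
      _ ≤ d x z + d z y := htri _ _ _ hx hy hz
      _ = d a b + d b' c := by rw [e1, e2]
      _ ≤ (minPM P d ξ ζ + ε / 2) + (minPM P d ζ η + ε / 2) := add_le_add hab.le hbc.le
      _ = minPM P d ξ ζ + minPM P d ζ η + ε := by
        rw [add_add_add_comm, ENNReal.add_halves]
  · intro ξ η ξ' η' h1 h2 h3 h4 h
    have e1 : Measure.map ξ P = Measure.map ξ' P := by
      rw [← Measure.fst_map_prodMk (X := ξ) h2, h, Measure.fst_map_prodMk h4]
    have e2 : Measure.map η P = Measure.map η' P := by
      rw [← Measure.snd_map_prodMk (Y := η) h1, h, Measure.snd_map_prodMk h3]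
    simp only [minPM, e1, e2]
end

section
/- Assume that for every Borel probability measure μ on the countable product ℕ → X there exists a Borel-measurable map ζ : Ω → (ℕ → X) whose law is μ. Let d be a probability metric on R(X), let ξ ∈ R(X) and let (ξₙ)ₙ be a sequence in R(X). Then lim_{n→∞} d̂(ξ, ξₙ) = 0 if and only if there exist ξ′ ∈ R(X) and a sequence (ξₙ′)ₙ in R(X) such that L(ξ′) = L(ξ), L(ξₙ′) = L(ξₙ) for all n, and lim_{n→∞} d(ξ′, ξₙ′) = 0. -/
open MeasureTheory Filter
open scoped ENNReal Topology

/-- A coupling is the law of `(x, f x u)` with `x` of the first marginal law, `u` uniform. -/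
lemma exists_rep_pair {Ω X : Type*} [MeasurableSpace Ω]
    [MeasurableSpace X] [StandardBorelSpace X] [Nonempty X]
    (P : Measure Ω) [IsProbabilityMeasure P]
    (a b : Ω → X) (ha : Measurable a) (hb : Measurable b) :
    ∃ f : X → unitInterval → X, Measurable (Function.uncurry f) ∧
      Measure.map (fun p : X × unitInterval => (p.1, f p.1 p.2))
        ((Measure.map a P).prod volume) = Measure.map (fun ω => (a ω, b ω)) P := by
  obtain ⟨f, hf, hfκ⟩ := ProbabilityTheory.Kernel.exists_measurable_map_eq_unitInterval
    (ProbabilityTheory.condDistrib b a P)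
  have : IsProbabilityMeasure (Measure.map a P) := Measure.isProbabilityMeasure_map ha.aemeasurable
  have hg : Measurable (fun p : X × unitInterval => (p.1, f p.1 p.2)) :=
    measurable_fst.prodMk hf
  refine ⟨f, hf, ?_⟩
  rw [← ProbabilityTheory.compProd_map_condDistrib hb.aemeasurable]
  ext s hs
  rw [Measure.map_apply hg hs, Measure.prod_apply (hg hs), Measure.compProd_apply hs]
  refine lintegral_congr fun x => ?_
  rw [← hfκ x, Measure.map_apply hf.of_uncurry_left (measurable_prodMk_left hs)]
  rfl

lemma exists_near_minPM {Ω X : Type*} [MeasurableSpace Ω] [MeasurableSpace X]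
    (P : Measure Ω) (d : (Ω → X) → (Ω → X) → ℝ≥0∞) (ξ η : Ω → X)
    (hξ : Measurable ξ) (hη : Measurable η) (ε : ℝ≥0∞) (hε : ε ≠ 0) :
    ∃ a b : Ω → X, Measurable a ∧ Measurable b ∧ Measure.map a P = Measure.map ξ P ∧
      Measure.map b P = Measure.map η P ∧ d a b ≤ minPM P d ξ η + ε := by
  by_cases h : minPM P d ξ η = ⊤
  · exact ⟨ξ, η, hξ, hη, rfl, rfl, by simp [h]⟩
  · have h1 : minPM P d ξ η < minPM P d ξ η + ε := ENNReal.lt_add_right h hε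
    conv_lhs at h1 => unfold minPM
    simp only [iInf_lt_iff] at h1
    obtain ⟨a, b, h1, h2, h3, h4, h5⟩ := h1
    exact ⟨a, b, h1, h2, h3, h4, h5.le⟩

/-- Assume every Borel probability measure on `ℕ → X` is the law of
some random variable. Let `d` be a probability metric on `R(X)`, `ξ ∈ R(X)` and
`(ξₙ)ₙ` a sequence in `R(X)`. Then `d̂(ξ, ξₙ) → 0` iff there exist representatives
`ξ′, (ξₙ′)ₙ` with `L(ξ′) = L(ξ)`, `L(ξₙ′) = L(ξₙ)` and `d(ξ′, ξₙ′) → 0`. -/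
theorem tendsto_minPM_zero_iff
    {Ω X : Type*} [MeasurableSpace Ω]
    [TopologicalSpace X] [PolishSpace X] [MeasurableSpace X] [BorelSpace X]
    (P : Measure Ω) [IsProbabilityMeasure P]
    (hrich : ∀ μ : Measure (ℕ → X), IsProbabilityMeasure μ →
      ∃ ζ : Ω → ℕ → X, Measurable ζ ∧ Measure.map ζ P = μ)
    (d : (Ω → X) → (Ω → X) → ℝ≥0∞)
    (hrefl : ∀ ξ : Ω → X, Measurable ξ → d ξ ξ = 0)
    (hsymm : ∀ ξ η : Ω → X, Measurable ξ → Measurable η → d ξ η = d η ξ)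
    (htri : ∀ ξ η ζ : Ω → X, Measurable ξ → Measurable η → Measurable ζ →
      d ξ η ≤ d ξ ζ + d ζ η)
    (hPM : ∀ ξ η ξ' η' : Ω → X, Measurable ξ → Measurable η →
      Measurable ξ' → Measurable η' →
      Measure.map (fun ω => (ξ ω, η ω)) P = Measure.map (fun ω => (ξ' ω, η' ω)) P →
      d ξ η = d ξ' η')
    (ξ : Ω → X) (hξ : Measurable ξ)
    (ξs : ℕ → Ω → X) (hξs : ∀ n, Measurable (ξs n)) :
    Tendsto (fun n => minPM P d ξ (ξs n)) atTop (𝓝 0) ↔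
    ∃ (ξ' : Ω → X) (ξs' : ℕ → Ω → X), Measurable ξ' ∧ (∀ n, Measurable (ξs' n)) ∧
      Measure.map ξ' P = Measure.map ξ P ∧
      (∀ n, Measure.map (ξs' n) P = Measure.map (ξs n) P) ∧
      Tendsto (fun n => d ξ' (ξs' n)) atTop (𝓝 0) := by
  constructor
  · intro h
    have : Nonempty Ω := by
      by_contra hne
      rw [not_nonempty_iff] at hne
      have := measure_univ (μ := P)
      simp [Measure.eq_zero_of_isEmpty P] at this
    have : Nonempty X := this.map ξ
    have key := fun n : ℕ => exists_near_minPM P d ξ (ξs n) hξ (hξs n) ((n : ℝ≥0∞)⁻¹) (by simp)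
    choose a b ha hb hal hbl hab using key
    choose f hf hfl using fun n => exists_rep_pair P (a n) (b n) (ha n) (hb n)
    have hPξ : IsProbabilityMeasure (Measure.map ξ P) :=
      Measure.isProbabilityMeasure_map hξ.aemeasurable
    let g : X × unitInterval → ℕ → X := fun p k => Nat.casesOn k p.1 (fun n => f n p.1 p.2)
    have hg : Measurable g := by
      refine measurable_pi_lambda _ fun k => ?_
      cases k with
      | zero => exact measurable_fst
      | succ n => exact hf n
    obtain ⟨ζ, hζ, hζl⟩ := hrich (Measure.map g ((Measure.map ξ P).prod volume))
      (Measure.isProbabilityMeasure_map hg.aemeasurable)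
    have hm : ∀ k, Measurable (fun ω => ζ ω k) := fun k => (measurable_pi_apply k).comp hζ
    have hpair : ∀ n, Measure.map (fun ω => (ζ ω 0, ζ ω (n + 1))) P
        = Measure.map (fun ω => (a n ω, b n ω)) P := by
      intro n
      have hφ : Measurable (fun z : ℕ → X => (z 0, z (n + 1))) :=
        (measurable_pi_apply 0).prodMk (measurable_pi_apply (n + 1))
      rw [← hfl n, hal n]
      have h1 := congrArg (Measure.map (fun z : ℕ → X => (z 0, z (n + 1)))) hζl
      rw [Measure.map_map hφ hζ, Measure.map_map hφ hg] at h1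
      exact h1
    refine ⟨fun ω => ζ ω 0, fun n ω => ζ ω (n + 1), hm 0, fun n => hm _, ?_, fun n => ?_, ?_⟩
    · have h1 := congrArg (Measure.map Prod.fst) (hpair 0)
      rw [Measure.map_map measurable_fst ((hm _).prodMk (hm _)),
        Measure.map_map measurable_fst ((ha _).prodMk (hb _))] at h1
      exact h1.trans (hal 0)
    · have h1 := congrArg (Measure.map Prod.snd) (hpair n)
      rw [Measure.map_map measurable_snd ((hm _).prodMk (hm _)),
        Measure.map_map measurable_snd ((ha _).prodMk (hb _))] at h1
      exact h1.trans (hbl n)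
    · have hlim : Tendsto (fun n : ℕ => minPM P d ξ (ξs n) + (n : ℝ≥0∞)⁻¹) atTop (𝓝 0) := by
        simpa using h.add ENNReal.tendsto_inv_nat_nhds_zero
      refine tendsto_of_tendsto_of_tendsto_of_le_of_le tendsto_const_nhds hlim
        (fun _ => zero_le) fun n => ?_
      exact (hPM _ _ _ _ (hm 0) (hm (n + 1)) (ha n) (hb n) (hpair n)).trans_le (hab n)
  · rintro ⟨ξ', ξs', h1, h2, h3, h4, h5⟩
    refine tendsto_of_tendsto_of_tendsto_of_le_of_le tendsto_const_nhds h5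
      (fun _ => zero_le) fun n => ?_
    exact iInf_le_of_le ξ' <| iInf_le_of_le (ξs' n) <| iInf_le_of_le h1 <|
      iInf_le_of_le (h2 n) <| iInf_le_of_le h3 <| iInf_le_of_le (h4 n) le_rfl
end
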